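/- Let g₁ and g₂ be two commuting Brouwer homeomorphisms of ℝ², and let D be a nonempty open disk in ℝ² such that D ∩ g₁(D) = ∅ and D ∩ g₂(D) = ∅. Define the return-time set R = {(n₁,n₂) ∈ ℤ × ℤ : g₁^{n₁}(g₂^{n₂}(D)) ∩ D ≠ ∅}. Then either R ∖ {(0,0)} ⊆ {(n₁,n₂) : n₁·n₂ > 0} or R ∖ {(0,0)} ⊆ {(n₁,n₂) : n₁·n₂ < 0}. -/

import Mathlib

/-- A map `g : ℝ² → ℝ²` is isotopic to the identity: there is a continuous
`H : [0,1] × ℝ² → ℝ²` with `H 0 = id`, `H 1 = g`, and `H t` a homeomorphism for every `t`. -/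
def IsotopicToIdentity (g : ℝ × ℝ → ℝ × ℝ) : Prop :=
  ∃ H : unitInterval × (ℝ × ℝ) → ℝ × ℝ, Continuous H ∧
    (∀ z : ℝ × ℝ, H (0, z) = z) ∧ (∀ z : ℝ × ℝ, H (1, z) = g z) ∧
    ∀ t : unitInterval, ∃ e : (ℝ × ℝ) ≃ₜ (ℝ × ℝ), ∀ z : ℝ × ℝ, H (t, z) = e z

/-- A Brouwer homeomorphism: an orientation-preserving (i.e. isotopic to the identity)
homeomorphism of the plane without fixed points. -/
def IsBrouwer (g : (ℝ × ℝ) ≃ₜ (ℝ × ℝ)) : Prop :=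
  IsotopicToIdentity g ∧ ∀ x : ℝ × ℝ, g x ≠ x

/-!
The core is Franks' lemma: a Brouwer homeomorphism has no closed chain of pairwise disjoint free
connected open sets. It is proved by strong induction on the length. In a chain of minimal length
the visited members are distinct, so pushing points inside them turns the chain into a periodic
orbit of another Brouwer homeomorphism. Period one is excluded by hypothesis and period two by a
winding number argument. For a longer period, follow a path from `x` to `g x` until it first meets
its own image: up to that time it is free, and suitable initial segments thicken to two disjoint
free sets which give a closed chain one step shorter than the period.

For the theorem, the sets `g₂ ^ k (D)` are pairwise disjoint and free for `g₁`. A return time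
`(n₁, n₂)` with `n₁ > 0` yields, for every `k`, a `g₁`-chain from `g₂ ^ k (D)` to
`g₂ ^ (k - n₂) (D)`. If both signs of `n₁ * n₂` occurred, such chains could be concatenated into a
closed one.
-/

open Set Topology Function

/-! ### Continuous logarithms and points of period two -/

lemma exists_continuousMap_exp_eq {A : Type*} [TopologicalSpace A] [SimplyConnectedSpace A]
    [LocallyPathConnectedSpace A] (f : C(A, ℂ)) (hf : ∀ a, f a ≠ 0) :
    ∃ L : C(A, ℂ), ∀ a, Complex.exp (L a) = f a := by
  obtain ⟨a₀⟩ : Nonempty A := inferInstance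
  obtain ⟨L, ⟨-, hL⟩, -⟩ := Complex.isCoveringMapOn_exp.existsUnique_continuousMap_lifts f
    (Complex.exp_log (hf a₀)) hf
  exact ⟨L, congrFun hL⟩

lemma eq_of_forall_exp_eq {A : Type*} [TopologicalSpace A] [PreconnectedSpace A] {f : A → ℂ}
    (hf : Continuous f) {w : ℂ} (hw : ∀ a, Complex.exp (f a) = w) (a b : A) : f a = f b :=
  Complex.isCoveringMap_exp.const_of_comp hf (fun a b => Subtype.ext ((hw a).trans (hw b).symm)) a b

-- The angle between `d (t, x)` and `d (t, g x)` is constant in `t`, while the gluing relation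
-- changes its sign between `t = 0` and `t = 1`; so it is zero and not an odd multiple of `π`.
lemma not_forall_apply_eq_neg_of_glued {E : Type*} [NormedAddCommGroup E] [NormedSpace ℝ E]
    {d : ℝ × E → ℂ} (hd : Continuous d) (hd₀ : ∀ p, d p ≠ 0) {g : E → E} (hg : Continuous g)
    (hglue : ∀ z, d (1, z) = d (0, g z)) {x : E} (hx : g (g x) = x) :
    ¬ ∀ t, d (t, g x) = -d (t, x) := by
  intro hneg
  obtain ⟨L, hL⟩ := exists_continuousMap_exp_eq ⟨d, hd⟩ hd₀
  simp only [ContinuousMap.coe_mk] at hL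
  have glued : L (1, x) - L (0, g x) = L (1, g x) - L (0, g (g x)) :=
    eq_of_forall_exp_eq (f := fun z => L (1, z) - L (0, g z)) (by fun_prop) (w := 1)
      (fun z => by rw [Complex.exp_sub, hL, hL, hglue, div_self (hd₀ _)]) x (g x)
  have exp_angle (t : ℝ) : Complex.exp (L (t, g x) - L (t, x)) = -1 := by
    rw [Complex.exp_sub, hL, hL, hneg, neg_div, div_self (hd₀ _)]
  have angle_const : L (0, g x) - L (0, x) = L (1, g x) - L (1, x) :=
    eq_of_forall_exp_eq (f := fun t : ℝ => L (t, g x) - L (t, x)) (by fun_prop) exp_angle 0 1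
  rw [hx] at glued
  have angle_zero : L (0, g x) - L (0, x) = 0 := by
    linear_combination (1 / 2) * angle_const - (1 / 2) * glued
  have exp_zero := exp_angle 0
  rw [angle_zero] at exp_zero
  norm_num at exp_zero

lemma IsotopicToIdentity.exists_real_isotopy {g : ℝ × ℝ → ℝ × ℝ} (hg : IsotopicToIdentity g) :
    ∃ H : ℝ × (ℝ × ℝ) → ℝ × ℝ, Continuous H ∧ (∀ z, H (0, z) = z) ∧ (∀ z, H (1, z) = g z) ∧
      ∀ t, Injective fun z => H (t, z) := by
  obtain ⟨H, H_cont, H_zero, H_one, H_homeo⟩ := hg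
  refine ⟨fun p => H (projIcc 0 1 zero_le_one p.1, p.2),
    H_cont.comp (continuous_projIcc.prodMap continuous_id), by simp [H_zero], by simp [H_one],
    fun t u v huv => ?_⟩
  obtain ⟨e, he⟩ := H_homeo (projIcc 0 1 zero_le_one t)
  exact e.injective (by simpa only [he] using huv)

lemma IsotopicToIdentity.apply_apply_ne {g : ℝ × ℝ → ℝ × ℝ} (hg : IsotopicToIdentity g)
    (hfix : ∀ x, g x ≠ x) (x : ℝ × ℝ) : g (g x) ≠ x := by
  intro hx
  obtain ⟨H, H_cont, H_zero, H_one, H_inj⟩ := hg.exists_real_isotopy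
  have g_cont : Continuous g := by
    rw [← funext H_one]
    fun_prop
  let toComplex := Complex.equivRealProdCLM.symm
  refine not_forall_apply_eq_neg_of_glued
    (d := fun p => toComplex (H (p.1, g p.2) - H (p.1, p.2))) (g := g)
    (by fun_prop) (fun p hp => ?_) g_cont (fun z => ?_) hx (fun t => ?_)
  · exact hfix p.2 (H_inj p.1 (sub_eq_zero.1 (toComplex.map_eq_zero_iff.1 hp)))
  · simp only [H_zero, H_one]
  · simp only [hx, ← map_neg, neg_sub]

lemma IsotopicToIdentity.comp {f g : ℝ × ℝ → ℝ × ℝ} (hf : IsotopicToIdentity f)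
    (hg : IsotopicToIdentity g) : IsotopicToIdentity (f ∘ g) := by
  obtain ⟨F, F_cont, F_zero, F_one, F_homeo⟩ := hf
  obtain ⟨G, G_cont, G_zero, G_one, G_homeo⟩ := hg
  refine ⟨fun p => F (p.1, G p), by fun_prop, by simp [F_zero, G_zero], by simp [F_one, G_one],
    fun t => ?_⟩
  obtain ⟨e, he⟩ := F_homeo t
  obtain ⟨e', he'⟩ := G_homeo t
  exact ⟨e'.trans e, fun z => by simp [he, he']⟩

/-! ### Pushing a point inside a connected open set -/

lemma exists_homeomorph_eq_add {E : Type*} [NormedAddCommGroup E] [NormedSpace ℝ E]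
    [CompleteSpace E] {f : E → E} {K : NNReal} (hf : LipschitzWith K f) (hK : K < 1) :
    ∃ e : E ≃ₜ E, ∀ z, e z = z + f z := by
  have approx : ApproximatesLinearOn (fun z => z + f z)
      (ContinuousLinearEquiv.refl ℝ E : E →L[ℝ] E) univ K := by
    intro u _ v _
    simpa [add_sub_add_comm] using hf.norm_sub_le u v
  have small : Subsingleton E ∨ K < ‖((ContinuousLinearEquiv.refl ℝ E).symm : E →L[ℝ] E)‖₊⁻¹ := by
    rcases subsingleton_or_nontrivial E with hE | hE
    · exact .inl hE
    · right
      simpa using hK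
  exact ⟨approx.toHomeomorph _ small, fun _ => rfl⟩

lemma lipschitzWith_max_zero_sub_dist_smul {E : Type*} [NormedAddCommGroup E] [NormedSpace ℝ E]
    (a : E) (r : ℝ) (w : E) : LipschitzWith ‖w‖₊ fun z => max 0 (r - dist z a) • w := by
  have cone : LipschitzWith 1 fun z => max 0 (r - dist z a) := by
    simpa using ((LipschitzWith.const r).sub (LipschitzWith.dist_left a)).const_max 0
  simpa [comp_def] using (ContinuousLinearMap.toSpanSingleton ℝ w).lipschitz.comp cone

/-- `b` is reached from `a` by a homeomorphism isotopic to the identity and supported in `V`.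
The isotopy itself is not required to be supported in `V`. -/
def Pushable (V : Set (ℝ × ℝ)) (a b : ℝ × ℝ) : Prop :=
  ∃ φ : (ℝ × ℝ) ≃ₜ (ℝ × ℝ), IsotopicToIdentity φ ∧ (∀ z ∉ V, φ z = z) ∧ φ a = b

lemma Pushable.trans {V : Set (ℝ × ℝ)} {a b c : ℝ × ℝ} (hab : Pushable V a b)
    (hbc : Pushable V b c) : Pushable V a c := by
  obtain ⟨φ, φ_iso, φ_supp, φ_a⟩ := hab
  obtain ⟨ψ, ψ_iso, ψ_supp, ψ_b⟩ := hbc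
  exact ⟨φ.trans ψ, ψ_iso.comp φ_iso, fun z hz => by simp [φ_supp z hz, ψ_supp z hz],
    by simp [φ_a, ψ_b]⟩

lemma pushable_of_ball_subset {V : Set (ℝ × ℝ)} {a b : ℝ × ℝ} {r : ℝ}
    (hV : Metric.ball a r ⊆ V) (hb : b ∈ Metric.ball a r) : Pushable V a b := by
  have hr : 0 < r := Metric.pos_of_mem_ball hb
  let w : ℝ × ℝ := r⁻¹ • (b - a)
  have norm_w : ‖w‖ < 1 := by
    rw [norm_smul, norm_inv, Real.norm_of_nonneg hr.le, ← dist_eq_norm, inv_mul_lt_one₀ hr]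
    exact hb
  have norm_smul_w (t : unitInterval) : ‖(t : ℝ) • w‖₊ < 1 := by
    rw [← NNReal.coe_lt_coe, coe_nnnorm, norm_smul, Real.norm_of_nonneg t.2.1]
    exact (mul_le_of_le_one_left (norm_nonneg w) t.2.2).trans_lt norm_w
  choose e he using fun t : unitInterval =>
    exists_homeomorph_eq_add (lipschitzWith_max_zero_sub_dist_smul a r ((t : ℝ) • w))
      (norm_smul_w t)
  refine ⟨e 1, ⟨fun p => p.2 + max 0 (r - dist p.2 a) • (p.1 : ℝ) • w, by fun_prop, by simp,
    fun z => (he 1 z).symm, fun t => ⟨e t, fun z => (he t z).symm⟩⟩, fun z hz => ?_, ?_⟩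
  · have hrz : r ≤ dist z a := not_lt.1 fun h => hz (hV h)
    simp [he, hrz]
  · simp [he, w, hr.le, hr.ne']

lemma pushable_of_isPreconnected {V : Set (ℝ × ℝ)} (hV : IsPreconnected V) (hVo : IsOpen V)
    {a b : ℝ × ℝ} (ha : a ∈ V) (hb : b ∈ V) : Pushable V a b := by
  refine hV.induction₂' (Pushable V) (fun x hx => ?_) (fun _ _ _ _ _ _ => Pushable.trans) ha hb
  obtain ⟨r, hr, hrV⟩ := Metric.isOpen_iff.1 hVo x hx
  filter_upwards [mem_nhdsWithin_of_mem_nhds (Metric.ball_mem_nhds x (half_pos hr))] with y hy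
  have ball_y_subset : Metric.ball y (r / 2) ⊆ V :=
    (Metric.ball_subset_ball' (by linarith [Metric.mem_ball.1 hy])).trans hrV
  exact ⟨pushable_of_ball_subset hrV (Metric.ball_subset_ball (half_le_self hr.le) hy),
    pushable_of_ball_subset ball_y_subset (Metric.mem_ball_comm.1 hy)⟩


/-! ### Free sets and chains -/

section Chains

variable {X : Type*}

/-- `V` is free for `g`, the standing condition on the sets of a chain: it is disjoint from its
image. -/
def IsFree (g : X → X) (V : Set X) : Prop :=
  Disjoint V (g '' V)

lemma isFree_iff {g : X → X} {V : Set X} : IsFree g V ↔ ∀ v ∈ V, g v ∉ V := by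
  rw [IsFree, disjoint_right, forall_mem_image]

lemma IsFree.notMem {g : X → X} {V : Set X} (hV : IsFree g V) {v : X} (hv : v ∈ V) : g v ∉ V :=
  isFree_iff.1 hV v hv

lemma IsFree.image_of_commute {g h : X → X} (hcomm : Function.Commute g h) (hh : Injective h)
    {V : Set X} (hV : IsFree g V) : IsFree g (h '' V) := by
  rw [IsFree, hcomm.set_image V, disjoint_image_iff hh]
  exact hV

/-- Two points are equal or lie in a common member of the family `𝒱`. -/
def SameMember (𝒱 : Set (Set X)) (u v : X) : Prop :=
  u = v ∨ ∃ V ∈ 𝒱, u ∈ V ∧ v ∈ V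

lemma SameMember.symm {𝒱 : Set (Set X)} {u v : X} (h : SameMember 𝒱 u v) : SameMember 𝒱 v u :=
  h.imp Eq.symm fun ⟨V, hV, hu, hv⟩ => ⟨V, hV, hv, hu⟩

lemma SameMember.mem {𝒱 : Set (Set X)} (h𝒱 : 𝒱.PairwiseDisjoint id) {u v : X}
    (h : SameMember 𝒱 u v) {V : Set X} (hV : V ∈ 𝒱) (hu : u ∈ V) : v ∈ V := by
  rcases h with rfl | ⟨W, hW, hu', hv⟩
  · exact hu
  · rwa [h𝒱.elim_set hV hW u hu hu']

lemma SameMember.trans {𝒱 : Set (Set X)} (h𝒱 : 𝒱.PairwiseDisjoint id) {u v w : X}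
    (huv : SameMember 𝒱 u v) (hvw : SameMember 𝒱 v w) : SameMember 𝒱 u w := by
  rcases huv with rfl | ⟨V, hV, hu, hv⟩
  · exact hvw
  · exact .inr ⟨V, hV, hu, hvw.mem h𝒱 hV hv⟩

/-- A step of a chain: apply `g`, then move inside a member of the family `𝒱`, or not at all. -/
def ChainStep (g : X → X) (𝒱 : Set (Set X)) (u v : X) : Prop :=
  SameMember 𝒱 (g u) v

/-- `y 0, …, y N` is a chain of `N` steps that closes up inside a member of `𝒱`. The terms of `y`
beyond `N` play no role. -/
structure IsClosedChain (g : X → X) (𝒱 : Set (Set X)) (N : ℕ) (y : ℕ → X) : Prop where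
  step : ∀ j < N, ChainStep g 𝒱 (y j) (y (j + 1))
  closes : SameMember 𝒱 (y N) (y 0)

lemma IsClosedChain.exists_apply_eq {g : X → X} {𝒱 : Set (Set X)} (h𝒱 : 𝒱.PairwiseDisjoint id)
    {N : ℕ} (hN : N ≠ 0) {y : ℕ → X} (hy : IsClosedChain g 𝒱 N y) :
    ∃ y' : ℕ → X, IsClosedChain g 𝒱 N y' ∧ y' N = y' 0 := by
  refine ⟨update y N (y 0), ⟨fun j hj => ?_, .inl ?_⟩, ?_⟩
  · rw [update_of_ne hj.ne]
    rcases eq_or_ne (j + 1) N with rfl | hj'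
    · rw [update_self]
      exact SameMember.trans h𝒱 (hy.step j hj) hy.closes
    · rw [update_of_ne hj']
      exact hy.step j hj
  all_goals rw [update_self, update_of_ne hN.symm]

lemma IsClosedChain.shortcut {g : X → X} {𝒱 : Set (Set X)} {N i k : ℕ} {y : ℕ → X}
    (hy : IsClosedChain g 𝒱 N y) (hik : i + k ≤ N) (h : SameMember 𝒱 (y i) (y (i + k))) :
    IsClosedChain g 𝒱 k fun l => y (i + l) :=
  ⟨fun l hl => hy.step (i + l) (by omega), h.symm⟩

lemma exists_seq_of_transGen {r : X → X → Prop} {u v : X} (h : Relation.TransGen r u v) :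
    ∃ (N : ℕ) (y : ℕ → X), y 0 = u ∧ y (N + 1) = v ∧ ∀ j < N + 1, r (y j) (y (j + 1)) := by
  induction h using Relation.TransGen.head_induction_on with
  | @single u huv => exact ⟨0, fun j => j.casesOn u fun _ => v, rfl, rfl, by simpa using huv⟩
  | @head u w huw _ ih =>
    obtain ⟨N, y, rfl, y_last, y_step⟩ := ih
    refine ⟨N + 1, fun j => j.casesOn u y, rfl, y_last, fun j hj => ?_⟩
    cases j with
    | zero => exact huw
    | succ j => exact y_step j (by omega)

lemma transGen_chainStep_of_iterate {g : X → X} {𝒱 : Set (Set X)} {u w : X} {n : ℕ}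
    (h : SameMember 𝒱 (g^[n + 1] u) w) : Relation.TransGen (ChainStep g 𝒱) u w := by
  induction n generalizing u with
  | zero => exact .single h
  | succ n ih => exact .head (.inl rfl) (ih h)

variable [TopologicalSpace X]

/-- A free set which is open and preconnected; the empty set is allowed. -/
structure IsFreeDomain (g : X → X) (V : Set X) : Prop where
  isOpen : IsOpen V
  isPreconnected : IsPreconnected V
  isFree : IsFree g V

/-- A family of pairwise disjoint free domains, the setting of Franks' lemma. -/
structure IsFreeDomainFamily (g : X → X) (𝒱 : Set (Set X)) : Prop where
  isFreeDomain : ∀ V ∈ 𝒱, IsFreeDomain g V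
  pairwiseDisjoint : 𝒱.PairwiseDisjoint id

lemma IsFreeDomain.singleton {g : X → X} {V : Set X} (hV : IsFreeDomain g V) :
    IsFreeDomainFamily g {V} :=
  ⟨by simpa using hV, pairwiseDisjoint_singleton V id⟩

lemma IsFreeDomain.pair {g : X → X} {V W : Set X} (hV : IsFreeDomain g V)
    (hW : IsFreeDomain g W) (hVW : Disjoint V W) : IsFreeDomainFamily g {V, W} :=
  ⟨by simp [hV, hW], pairwise_pair.2 fun _ => ⟨hVW, hVW.symm⟩⟩

lemma IsFreeDomainFamily.not_sameMember_apply {g : X → X} {𝒱 : Set (Set X)}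
    (h𝒱 : IsFreeDomainFamily g 𝒱) {x : X} (hx : g x ≠ x) : ¬ SameMember 𝒱 x (g x) := by
  rintro (h | ⟨V, hV, hxV, hgxV⟩)
  · exact hx h.symm
  · exact (h𝒱.isFreeDomain V hV).isFree.notMem hxV hgxV

lemma IsFreeDomainFamily.of_sameMember {g g' : X → X} {𝒱 : Set (Set X)}
    (h𝒱 : IsFreeDomainFamily g 𝒱) (hg' : ∀ z, SameMember 𝒱 (g' z) (g z)) :
    IsFreeDomainFamily g' 𝒱 := by
  refine ⟨fun V hV => ?_, h𝒱.pairwiseDisjoint⟩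
  obtain ⟨V_open, V_conn, V_free⟩ := h𝒱.isFreeDomain V hV
  exact ⟨V_open, V_conn, isFree_iff.2 fun v hv hgv =>
    V_free.notMem hv ((hg' v).mem h𝒱.pairwiseDisjoint hV hgv)⟩

lemma IsFree.exists_isFreeDomain [T2Space X] [LocallyConnectedSpace X] {g : X → X}
    (hg : Continuous g) {K U : Set X} (hKf : IsFree g K) (hK : IsCompact K)
    (hKc : IsPreconnected K) (hU : IsOpen U) (hKU : K ⊆ U) :
    ∃ V, IsFreeDomain g V ∧ K ⊆ V ∧ V ⊆ U := by
  rcases K.eq_empty_or_nonempty with rfl | ⟨x, hx⟩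
  · exact ⟨∅, ⟨isOpen_empty, isPreconnected_empty, by simp [IsFree]⟩, subset_rfl, empty_subset U⟩
  obtain ⟨A, B, hA, hB, hKA, hKB, hAB⟩ :=
    SeparatedNhds.of_isCompact_isCompact hK (hK.image hg) hKf
  let N := U ∩ A ∩ g ⁻¹' B
  have N_open : IsOpen N := (hU.inter hA).inter (hB.preimage hg)
  have hKN : K ⊆ N := subset_inter (subset_inter hKU hKA) (image_subset_iff.1 hKB)
  have component_subset : connectedComponentIn N x ⊆ N := connectedComponentIn_subset N x
  refine ⟨connectedComponentIn N x,
    ⟨N_open.connectedComponentIn, isPreconnected_connectedComponentIn, ?_⟩,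
    hKc.subset_connectedComponentIn hx hKN, fun z hz => (component_subset hz).1.1⟩
  exact hAB.mono (fun z hz => (component_subset hz).1.2)
    (image_subset_iff.2 fun z hz => (component_subset hz).2)

/-- `g` has no closed chain of `N` steps, whatever the family of disjoint free domains. -/
def NoClosedChain (g : X → X) (N : ℕ) : Prop :=
  ∀ 𝒱, IsFreeDomainFamily g 𝒱 → ∀ y, ¬ IsClosedChain g 𝒱 N y

lemma NoClosedChain.iterate_notMem {g : X → X} {N : ℕ} (hN : NoClosedChain g N) {V : Set X}
    (hV : IsFreeDomain g V) {v : X} (hv : v ∈ V) : g^[N] v ∉ V := fun hv' =>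
  hN {V} hV.singleton (fun j => g^[j] v)
    ⟨fun j _ => .inl (iterate_succ_apply' g j v).symm, .inr ⟨V, rfl, hv', hv⟩⟩

end Chains

/-! ### Excluding longer periods -/

section Periodic

variable {X : Type*} {g : X → X} {γ : ℝ → X}

lemma disjoint_image_Icc_image_image {a b : ℝ} (hg : Injective g) (hne : a ≠ b)
    (hab : g (γ a) = γ b) (hfree : ∀ t < max a b, IsFree g (γ '' Icc 0 t))
    (hret : ∀ t < max a b, ∀ v ∈ γ '' Icc 0 t, g (g v) ∉ γ '' Icc 0 t) :
    Disjoint (γ '' Icc 0 b) (g '' (g '' (γ '' Icc 0 a))) := by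
  rw [disjoint_right, forall_mem_image, forall_mem_image, forall_mem_image]
  rintro s ⟨hs₀, hsa⟩ ⟨t, ⟨ht₀, htb⟩, hts⟩
  rcases lt_or_ge s (max a b) with hs | hs
  · rcases lt_or_ge t (max a b) with ht | ht
    · refine hret (max s t) (max_lt hs ht) (γ s) ⟨s, ⟨hs₀, le_max_left s t⟩, rfl⟩ ?_
      exact ⟨t, ⟨ht₀, le_max_right s t⟩, hts⟩
    · obtain ⟨hat, hbt⟩ := max_le_iff.1 ht
      obtain rfl : t = b := htb.antisymm hbt
      have hgs : g (γ s) = γ a := hg (hts.symm.trans hab.symm)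
      exact (hfree a (lt_max_of_lt_right (hat.lt_of_ne hne))).notMem ⟨s, ⟨hs₀, hsa⟩, rfl⟩
        ⟨a, ⟨hs₀.trans hsa, le_rfl⟩, hgs.symm⟩
  · obtain ⟨has, hbs⟩ := max_le_iff.1 hs
    obtain rfl : s = a := hsa.antisymm has
    have hgb : g (γ b) = γ t := by rw [← hab, hts]
    exact (hfree b (lt_max_of_lt_left (hbs.lt_of_ne hne.symm))).notMem
      ⟨b, ⟨ht₀.trans htb, le_rfl⟩, rfl⟩ ⟨t, ⟨ht₀, htb⟩, hgb.symm⟩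

variable [TopologicalSpace X]

-- The chain is `q, g² x, g³ x, …, gᴺ⁺² x = x`, with a jump in `W` at the start and one in `V` at
-- the end.
lemma NoClosedChain.not_isPeriodicPt_of_mem {N : ℕ} (hN : NoClosedChain g (N + 1)) {V W : Set X}
    (hV : IsFreeDomain g V) (hW : IsFreeDomain g W) (hVW : Disjoint V W) {x q : X} (hxV : x ∈ V)
    (hxW : g (g x) ∈ W) (hqV : q ∈ V) (hqW : g q ∈ W) : ¬ IsPeriodicPt g (N + 2) x := by
  intro hx
  refine hN {V, W} (hV.pair hW hVW) (fun j => j.casesOn q fun i => g^[i + 2] x)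
    ⟨fun j _ => ?_, .inr ⟨V, mem_insert V {W}, ?_, hqV⟩⟩
  · cases j with
    | zero => exact .inr ⟨W, mem_insert_of_mem V rfl, hqW, hxW⟩
    | succ i => exact .inl (iterate_succ_apply' g (i + 2) x).symm
  · change g^[N + 2] x ∈ V
    rwa [hx.eq]

lemma exists_first_contact [T2Space X] (hg : Continuous g) (hγ : Continuous γ)
    (hγg : g (γ 0) = γ 1) :
    ∃ a ∈ Icc (0 : ℝ) 1, ∃ b ∈ Icc (0 : ℝ) 1, g (γ a) = γ b ∧
      ∀ t < max a b, IsFree g (γ '' Icc 0 t) := by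
  let contacts : Set (ℝ × ℝ) := Icc 0 1 ×ˢ Icc 0 1 ∩ {p | g (γ p.1) = γ p.2}
  have contacts_compact : IsCompact contacts :=
    (isCompact_Icc.prod isCompact_Icc).inter_right (isClosed_eq (by fun_prop) (by fun_prop))
  obtain ⟨⟨a, b⟩, ⟨⟨ha, hb⟩, hab⟩, hmin⟩ := contacts_compact.exists_isMinOn
    ⟨(0, 1), by simpa [contacts] using hγg⟩ (f := fun p => max p.1 p.2) (by fun_prop)
  refine ⟨a, ha, b, hb, hab, fun t ht => isFree_iff.2 ?_⟩
  rintro _ ⟨s, hs, rfl⟩ ⟨s', hs', hss'⟩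
  have ht₁ : t ≤ 1 := ht.le.trans (max_le ha.2 hb.2)
  have contact_le : max a b ≤ max s s' :=
    hmin (a := (s, s')) ⟨⟨⟨hs.1, hs.2.trans ht₁⟩, ⟨hs'.1, hs'.2.trans ht₁⟩⟩, hss'.symm⟩
  exact (contact_le.trans (max_le hs.2 hs'.2)).not_gt ht

lemma NoClosedChain.apply_apply_notMem [T2Space X] [LocallyConnectedSpace X]
    (h₂ : NoClosedChain g 2) (hg : Continuous g) {K : Set X} (hK : IsCompact K)
    (hKc : IsPreconnected K) (hKf : IsFree g K) {v : X} (hv : v ∈ K) : g (g v) ∉ K := by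
  obtain ⟨V, hV, hKV, -⟩ := hKf.exists_isFreeDomain hg hK hKc isOpen_univ (subset_univ K)
  exact fun hv' => h₂.iterate_notMem hV (hKV hv) (hKV hv')

lemma exists_mem_Ico_apply_mem {f : ℝ → X} (hf : Continuous f) {U : Set X} (hU : IsOpen U)
    {a b : ℝ} (hab : a < b) (hb : f b ∈ U) : ∃ s ∈ Ico a b, f s ∈ U :=
  Filter.nonempty_of_mem <| Filter.inter_mem (Ico_mem_nhdsLT hab)
    (mem_nhdsWithin_of_mem_nhds (hf.continuousAt (hU.mem_nhds hb)))

variable [T2Space X] [LocallyConnectedSpace X]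

-- `g` takes a point of the arc up to `b` into the second image of the arc up to `a`. The longer of
-- the two arcs need not be free; cut slightly before its end it is, and thickening the other one
-- preserves the contact.
lemma NoClosedChain.not_isPeriodicPt_of_contact {N : ℕ} (hN : NoClosedChain g (N + 1))
    (hg : Continuous g) (hinj : Injective g) (hγ : Continuous γ) {a b : ℝ} (ha : 0 ≤ a)
    (hb : 0 ≤ b) (hne : a ≠ b) (hab : g (γ a) = γ b)
    (hfree : ∀ t < max a b, IsFree g (γ '' Icc 0 t))
    (hdisj : Disjoint (γ '' Icc 0 b) (g '' (g '' (γ '' Icc 0 a)))) :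
    ¬ IsPeriodicPt g (N + 2) (γ 0) := by
  have arc_compact (t : ℝ) : IsCompact (γ '' Icc 0 t) := isCompact_Icc.image hγ
  have arc_conn (t : ℝ) : IsPreconnected (γ '' Icc 0 t) :=
    isPreconnected_Icc.image γ hγ.continuousOn
  have arc_subset {s t : ℝ} (hst : s ≤ t) : γ '' Icc 0 s ⊆ γ '' Icc 0 t :=
    image_mono (Icc_subset_Icc_right hst)
  obtain ⟨A, B, hA, hB, hbA, haB, hAB⟩ := SeparatedNhds.of_isCompact_isCompact (arc_compact b)
    (((arc_compact a).image hg).image hg) hdisj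
  have exists_V (t : ℝ) (ht : t < max a b) (htb : t ≤ b) :
      ∃ V, IsFreeDomain g V ∧ γ '' Icc 0 t ⊆ V ∧ V ⊆ A :=
    (hfree t ht).exists_isFreeDomain hg (arc_compact t) (arc_conn t) hA
      ((arc_subset htb).trans hbA)
  have exists_W (t : ℝ) (ht : t < max a b) (hta : t ≤ a) :
      ∃ W, IsFreeDomain g W ∧ g '' (g '' (γ '' Icc 0 t)) ⊆ W ∧ W ⊆ B :=
    (((hfree t ht).image_of_commute (.refl g) hinj).image_of_commute (.refl g) hinj)
      |>.exists_isFreeDomain hg (((arc_compact t).image hg).image hg)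
      (((arc_conn t).image g hg.continuousOn).image g hg.continuousOn) hB
      ((image_mono (image_mono (arc_subset hta))).trans haB)
  rcases hne.lt_or_gt with hlt | hlt
  · obtain ⟨W, hW, haW, hWB⟩ := exists_W a (lt_max_of_lt_right hlt) le_rfl
    obtain ⟨s, ⟨hs₀, hsb⟩, hsW⟩ := exists_mem_Ico_apply_mem (hg.comp hγ) hW.isOpen
      (ha.trans_lt hlt) (haW ⟨γ b, ⟨γ a, ⟨a, ⟨ha, le_rfl⟩, rfl⟩, hab⟩, rfl⟩)
    obtain ⟨V, hV, hsV, hVA⟩ := exists_V s (lt_max_of_lt_right hsb) hsb.le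
    exact hN.not_isPeriodicPt_of_mem hV hW (hAB.mono hVA hWB) (hsV ⟨0, ⟨le_rfl, hs₀⟩, rfl⟩)
      (haW ⟨g (γ 0), ⟨γ 0, ⟨0, ⟨le_rfl, ha⟩, rfl⟩, rfl⟩, rfl⟩) (hsV ⟨s, ⟨hs₀, le_rfl⟩, rfl⟩) hsW
  · obtain ⟨V, hV, hbV, hVA⟩ := exists_V b (lt_max_of_lt_left hlt) le_rfl
    obtain ⟨s, ⟨hs₀, hsa⟩, hsV⟩ := exists_mem_Ico_apply_mem (hg.comp hγ) hV.isOpen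
      (hb.trans_lt hlt) (hbV ⟨b, ⟨hb, le_rfl⟩, hab.symm⟩)
    obtain ⟨W, hW, hsW, hWB⟩ := exists_W s (lt_max_of_lt_left hsa) hsa.le
    exact hN.not_isPeriodicPt_of_mem hV hW (hAB.mono hVA hWB) (hbV ⟨0, ⟨le_rfl, hb⟩, rfl⟩)
      (hsW ⟨g (γ 0), ⟨γ 0, ⟨0, ⟨le_rfl, hs₀⟩, rfl⟩, rfl⟩, rfl⟩) hsV
      (hsW ⟨g (γ s), ⟨γ s, ⟨s, ⟨hs₀, le_rfl⟩, rfl⟩, rfl⟩, rfl⟩)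

lemma NoClosedChain.not_isPeriodicPt [PathConnectedSpace X] {N : ℕ}
    (hN : NoClosedChain g (N + 1)) (h₂ : NoClosedChain g 2) (hg : Continuous g)
    (hinj : Injective g) (hfix : ∀ x, g x ≠ x) (x : X) : ¬ IsPeriodicPt g (N + 2) x := by
  let path : Path x (g x) := PathConnectedSpace.somePath x (g x)
  let γ : ℝ → X := path.extend
  have hγ : Continuous γ := path.continuous_extend
  have γ_zero : γ 0 = x := path.extend_zero
  obtain ⟨a, ha, b, hb, hab, hfree⟩ :=
    exists_first_contact hg hγ (by rw [γ_zero]; exact path.extend_one.symm)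
  have hne : a ≠ b := by
    rintro rfl
    exact hfix _ hab
  have hret (t : ℝ) (ht : t < max a b) (v : X) (hv : v ∈ γ '' Icc 0 t) :
      g (g v) ∉ γ '' Icc 0 t :=
    h₂.apply_apply_notMem hg (isCompact_Icc.image hγ)
      (isPreconnected_Icc.image γ hγ.continuousOn) (hfree t ht) hv
  rw [← γ_zero]
  exact hN.not_isPeriodicPt_of_contact hg hinj hγ ha.1 hb.1 hne hab hfree
    (disjoint_image_Icc_image_image hinj hne hab hfree hret)

end Periodic

/-! ### Franks' lemma -/

section Franks

variable {g : (ℝ × ℝ) ≃ₜ (ℝ × ℝ)} {𝒱 : Set (Set (ℝ × ℝ))}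

lemma IsBrouwer.exists_redirect (hg : IsBrouwer g) (h𝒱 : IsFreeDomainFamily g 𝒱)
    {p q : ℝ × ℝ} (hpq : SameMember 𝒱 p q) :
    ∃ g' : (ℝ × ℝ) ≃ₜ (ℝ × ℝ), IsBrouwer g' ∧ (∀ z, SameMember 𝒱 (g' z) (g z)) ∧
      (∀ z, ¬ SameMember 𝒱 (g z) p → g' z = g z) ∧ ∀ z, g z = p → g' z = q := by
  rcases hpq with rfl | ⟨V, hV, hp, hq⟩
  · exact ⟨g, hg, fun _ => .inl rfl, fun _ _ => rfl, fun _ => id⟩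
  obtain ⟨V_open, V_conn, -⟩ := h𝒱.isFreeDomain V hV
  obtain ⟨φ, φ_iso, φ_supp, φ_p⟩ := pushable_of_isPreconnected V_conn V_open hp hq
  have φ_mem {w : ℝ × ℝ} (hw : w ∈ V) : φ w ∈ V := by
    by_contra hφw
    exact hφw (by rwa [φ.injective (φ_supp _ hφw)])
  have φ_sameMember (w : ℝ × ℝ) : SameMember 𝒱 (φ w) w := by
    by_cases hw : w ∈ V
    · exact .inr ⟨V, hV, φ_mem hw, hw⟩
    · exact .inl (φ_supp w hw)
  refine ⟨g.trans φ, ⟨φ_iso.comp hg.1, fun x hx => ?_⟩, fun z => φ_sameMember (g z),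
    fun z hz => φ_supp _ fun hgz => hz (.inr ⟨V, hV, hgz, hp⟩), fun z hz => ?_⟩
  · have back : SameMember 𝒱 (φ (g x)) (g x) := φ_sameMember (g x)
    rw [show φ (g x) = x from hx] at back
    exact h𝒱.not_sameMember_apply (hg.2 x) back
  · rw [Homeomorph.trans_apply, hz, φ_p]

lemma IsBrouwer.exists_orbit_of_chain (hg : IsBrouwer g) (h𝒱 : IsFreeDomainFamily g 𝒱)
    {y : ℕ → ℝ × ℝ} {N : ℕ} (hy : ∀ j < N, ChainStep g 𝒱 (y j) (y (j + 1)))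
    (hdistinct : ∀ j < N, ∀ i < j, ¬ SameMember 𝒱 (y (i + 1)) (y (j + 1))) :
    ∃ g' : (ℝ × ℝ) ≃ₜ (ℝ × ℝ), IsBrouwer g' ∧ (∀ z, SameMember 𝒱 (g' z) (g z)) ∧
      ∀ j < N, g' (y j) = y (j + 1) := by
  induction N with
  | zero => exact ⟨g, hg, fun _ => .inl rfl, fun j hj => absurd hj j.not_lt_zero⟩
  | succ N ih =>
    obtain ⟨g₁, hg₁, near₁, orbit₁⟩ := ih (fun j hj => hy j (by omega))
      (fun j hj => hdistinct j (by omega))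
    have last_step : SameMember 𝒱 (g₁ (y N)) (y (N + 1)) :=
      (near₁ (y N)).trans h𝒱.pairwiseDisjoint (hy N N.lt_succ_self)
    obtain ⟨g₂, hg₂, near₂, fixed₂, redirect₂⟩ :=
      hg₁.exists_redirect (h𝒱.of_sameMember near₁) last_step
    refine ⟨g₂, hg₂, fun z => (near₂ z).trans h𝒱.pairwiseDisjoint (near₁ z), fun j hj => ?_⟩
    rcases Nat.lt_succ_iff_lt_or_eq.1 hj with hjN | rfl
    · rw [fixed₂ (y j) fun h => ?_, orbit₁ j hjN]
      rw [orbit₁ j hjN] at h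
      exact hdistinct N N.lt_succ_self j hjN (h.trans h𝒱.pairwiseDisjoint last_step)
    · exact redirect₂ (y j) rfl

lemma iterate_eq_of_forall_apply_eq {X : Type*} {f : X → X} {y : ℕ → X} {N : ℕ}
    (hy : ∀ j < N, f (y j) = y (j + 1)) : f^[N] (y 0) = y N := by
  induction N with
  | zero => rfl
  | succ N ih =>
    rw [iterate_succ_apply', ih fun j hj => hy j (by omega), hy N N.lt_succ_self]

theorem IsBrouwer.noClosedChain (hg : IsBrouwer g) (N : ℕ) : NoClosedChain g (N + 1) := by
  induction N using Nat.strong_induction_on generalizing g with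
  | _ N ih =>
    intro 𝒱 h𝒱 y₀ hy₀
    obtain ⟨y, hy, y_closed⟩ := hy₀.exists_apply_eq h𝒱.pairwiseDisjoint N.succ_ne_zero
    have distinct (j) (hj : j < N + 1) (i) (hij : i < j) :
        ¬ SameMember 𝒱 (y (i + 1)) (y (j + 1)) := by
      obtain ⟨k, rfl⟩ := Nat.exists_eq_add_of_lt hij
      exact fun h => ih k (by omega) hg 𝒱 h𝒱 _
        (hy.shortcut (by omega) ((by ring : i + k + 1 + 1 = i + 1 + (k + 1)) ▸ h))
    obtain ⟨g', hg', -, orbit⟩ := hg.exists_orbit_of_chain h𝒱 hy.step distinct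
    have periodic : IsPeriodicPt g' (N + 1) (y 0) :=
      (iterate_eq_of_forall_apply_eq orbit).trans y_closed
    match N with
    | 0 => exact hg'.2 _ periodic
    | 1 => exact hg'.1.apply_apply_ne hg'.2 _ periodic
    | N + 2 =>
      exact (ih (N + 1) (by omega) hg').not_isPeriodicPt (ih 1 (by omega) hg') g'.continuous
        g'.injective hg'.2 _ periodic

lemma IsBrouwer.not_transGen_chainStep_self (hg : IsBrouwer g) (h𝒱 : IsFreeDomainFamily g 𝒱)
    (u : ℝ × ℝ) : ¬ Relation.TransGen (ChainStep g 𝒱) u u := by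
  intro h
  obtain ⟨N, y, y_first, y_last, y_step⟩ := exists_seq_of_transGen h
  exact hg.noClosedChain N 𝒱 h𝒱 y ⟨y_step, .inl (y_last.trans y_first.symm)⟩

end Franks

/-! ### Return times -/

section Iterates

variable {X : Type*} [TopologicalSpace X]

lemma coe_homeomorph_pow (g : X ≃ₜ X) (n : ℕ) : ⇑(g ^ n) = g^[n] :=
  hom_coe_pow _ rfl (fun _ _ => rfl) g n

lemma coe_toEquiv_zpow (g : X ≃ₜ X) (n : ℤ) : ⇑(g.toEquiv ^ n) = ⇑(g ^ n) :=
  let toPerm : (X ≃ₜ X) →* Equiv.Perm X := ⟨⟨Homeomorph.toEquiv, rfl⟩, fun _ _ => rfl⟩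
  congrArg DFunLike.coe (map_zpow toPerm g n).symm

/-- The pairs `n` for which `g₁ ^ n.1 * g₂ ^ n.2` brings some point of `D` back to `D`. -/
def returnTimes (g₁ g₂ : X ≃ₜ X) (D : Set X) : Set (ℤ × ℤ) :=
  {n | (⇑(g₁ ^ n.1) '' (⇑(g₂ ^ n.2) '' D) ∩ D).Nonempty}

/-- The images of `D` under the powers of `g`, indexed by the exponent. -/
def translates (g : X ≃ₜ X) (D : Set X) (k : ℤ) : Set X :=
  ⇑(g ^ k) '' D

variable {g₁ g₂ : X ≃ₜ X} {D : Set X}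

lemma mem_returnTimes {n : ℤ × ℤ} :
    n ∈ returnTimes g₁ g₂ D ↔ ∃ u ∈ D, (g₁ ^ n.1 * g₂ ^ n.2) u ∈ D := by
  rw [returnTimes, mem_ofPred_eq, inter_nonempty, exists_mem_image, exists_mem_image]
  rfl

lemma neg_mem_returnTimes (hcomm : Commute g₁ g₂) {n : ℤ × ℤ} (hn : n ∈ returnTimes g₁ g₂ D) :
    -n ∈ returnTimes g₁ g₂ D := by
  obtain ⟨u, hu, hv⟩ := mem_returnTimes.1 hn
  refine mem_returnTimes.2 ⟨_, hv, ?_⟩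
  have inverse : g₁ ^ (-n).1 * g₂ ^ (-n).2 * (g₁ ^ n.1 * g₂ ^ n.2) = 1 := by
    rw [Prod.fst_neg, Prod.snd_neg, zpow_neg, zpow_neg, ← mul_inv_rev,
      ← (hcomm.zpow_zpow n.1 n.2).eq, inv_mul_cancel]
  rwa [← Homeomorph.mul_apply, inverse]

end Iterates

section Shifts

variable {X : Type*}

/-- A single point of `A` reaches every point of `B` along chains; with this choice of quantifiers
the relation composes. -/
def ChainsTo (g : X → X) (𝒱 : Set (Set X)) (A B : Set X) : Prop :=
  ∃ u ∈ A, ∀ w ∈ B, Relation.TransGen (ChainStep g 𝒱) u w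

lemma ChainsTo.trans {g : X → X} {𝒱 : Set (Set X)} {A B C : Set X} (hAB : ChainsTo g 𝒱 A B)
    (hBC : ChainsTo g 𝒱 B C) : ChainsTo g 𝒱 A C := by
  obtain ⟨u, hu, huB⟩ := hAB
  obtain ⟨v, hv, hvC⟩ := hBC
  exact ⟨u, hu, fun w hw => (huB v hv).trans (hvC w hw)⟩

/-- The shifts of the index along which chains lead from every member of the family `V`. -/
def chainShifts (g : X → X) (V : ℤ → Set X) : AddSubsemigroup ℤ where
  carrier := {d | ∀ i, ChainsTo g (range V) (V i) (V (i + d))}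
  add_mem' {d e} hd he i := by
    rw [← add_assoc]
    exact (hd i).trans (he (i + d))

lemma mul_mem_addSubsemigroup_of_pos {S : AddSubsemigroup ℤ} {d n : ℤ} (hd : d ∈ S) (hn : 0 < n) :
    n * d ∈ S := by
  induction n, (hn : 1 ≤ n) using Int.leInduction with
  | base => simpa using hd
  | succ n hn ih =>
    rw [add_one_mul]
    exact S.add_mem ih hd

lemma zero_mem_addSubsemigroup_of_neg_of_pos {S : AddSubsemigroup ℤ} {d e : ℤ} (hd : d ∈ S)
    (he : e ∈ S) (hd₀ : d < 0) (he₀ : 0 < e) : 0 ∈ S := by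
  have sum_mem : e * d + -d * e ∈ S := S.add_mem (mul_mem_addSubsemigroup_of_pos hd he₀)
    (mul_mem_addSubsemigroup_of_pos he (neg_pos.2 hd₀))
  rwa [show e * d + -d * e = 0 by ring] at sum_mem

variable [TopologicalSpace X] {g₁ g₂ : X ≃ₜ X} {D : Set X}

lemma neg_snd_mem_chainShifts_of_mem_returnTimes (hcomm : Commute g₁ g₂) {n : ℤ × ℤ}
    (hn : n ∈ returnTimes g₁ g₂ D) (hn₁ : 0 < n.1) : -n.2 ∈ chainShifts g₁ (translates g₂ D) := by
  intro i
  obtain ⟨u, hu, hv⟩ := mem_returnTimes.1 hn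
  obtain ⟨m, hm⟩ := Int.eq_succ_of_zero_lt hn₁
  have arrives : g₁^[m + 1] ((g₂ ^ i) u) ∈ translates g₂ D (i + -n.2) := by
    refine ⟨_, hv, ?_⟩
    have words_eq : g₂ ^ (i + -n.2) * (g₁ ^ n.1 * g₂ ^ n.2) = g₁ ^ n.1 * g₂ ^ i := by
      rw [(hcomm.zpow_zpow n.1 n.2).eq, ← mul_assoc, ← zpow_add, neg_add_cancel_right,
        (hcomm.zpow_zpow n.1 i).eq]
    rw [← Homeomorph.mul_apply, words_eq, Homeomorph.mul_apply, hm, ← coe_homeomorph_pow]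
    rfl
  exact ⟨(g₂ ^ i) u, mem_image_of_mem _ hu, fun w hw =>
    transGen_chainStep_of_iterate (.inr ⟨_, mem_range_self (i + -n.2), arrives, hw⟩)⟩

lemma neg_mul_mem_chainShifts_of_mem_returnTimes (hcomm : Commute g₁ g₂) {n : ℤ × ℤ}
    (hn : n ∈ returnTimes g₁ g₂ D) (hn₁ : n.1 ≠ 0) :
    -(n.1 * n.2) ∈ chainShifts g₁ (translates g₂ D) := by
  rcases hn₁.lt_or_gt with neg | pos
  · have shift := neg_snd_mem_chainShifts_of_mem_returnTimes hcomm
      (neg_mem_returnTimes hcomm hn) (neg_pos.2 neg)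
    simpa using mul_mem_addSubsemigroup_of_pos shift (neg_pos.2 neg)
  · have shift := neg_snd_mem_chainShifts_of_mem_returnTimes hcomm hn pos
    simpa using mul_mem_addSubsemigroup_of_pos shift pos

end Shifts

section Dichotomy

variable {g g₁ g₂ : (ℝ × ℝ) ≃ₜ (ℝ × ℝ)} {D : Set (ℝ × ℝ)}

lemma IsBrouwer.zpow_apply_notMem (hg : IsBrouwer g) (hD : IsFreeDomain g D) {k : ℤ}
    (hk : k ≠ 0) {u : ℝ × ℝ} (hu : u ∈ D) : (g ^ k) u ∉ D := by
  have pow_apply_notMem (n : ℕ) (v : ℝ × ℝ) (hv : v ∈ D) : (g ^ (n + 1)) v ∉ D := by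
    rw [coe_homeomorph_pow]
    exact (hg.noClosedChain n).iterate_notMem hD hv
  match k with
  | (0 : ℕ) => exact absurd rfl hk
  | (n + 1 : ℕ) => exact pow_apply_notMem n u hu
  | .negSucc n =>
    intro hv
    refine pow_apply_notMem n _ hv ?_
    rwa [← Homeomorph.mul_apply, zpow_negSucc, mul_inv_cancel]

lemma IsBrouwer.isFreeDomainFamily_translates (h₂ : IsBrouwer g₂) (hcomm : Commute g₁ g₂)
    (hD₁ : IsFreeDomain g₁ D) (hD₂ : IsFreeDomain g₂ D) :
    IsFreeDomainFamily g₁ (range (translates g₂ D)) := by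
  refine ⟨forall_mem_range.2 fun k => ?_, ?_⟩
  · have commute_zpow : Function.Commute g₁ ⇑(g₂ ^ k) :=
      fun z => DFunLike.congr_fun (hcomm.zpow_right k).eq z
    exact ⟨(g₂ ^ k).isOpenMap D hD₁.isOpen,
      hD₁.isPreconnected.image _ (g₂ ^ k).continuous.continuousOn,
      hD₁.isFree.image_of_commute commute_zpow (g₂ ^ k).injective⟩
  · rintro _ ⟨i, rfl⟩ _ ⟨j, rfl⟩ hij
    have index_ne : i - j ≠ 0 := sub_ne_zero.2 fun h => hij (h ▸ rfl)
    refine disjoint_left.2 ?_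
    rintro _ ⟨u, hu, rfl⟩ ⟨v, hv, hvu⟩
    refine h₂.zpow_apply_notMem hD₂ index_ne hu ?_
    have back : (g₂ ^ (i - j)) u = v := by
      apply (g₂ ^ j).injective
      rw [hvu, ← Homeomorph.mul_apply, ← zpow_add, add_sub_cancel]
    rwa [back]

lemma mul_ne_zero_of_mem_returnTimes (h₁ : IsBrouwer g₁) (h₂ : IsBrouwer g₂)
    (hD₁ : IsFreeDomain g₁ D) (hD₂ : IsFreeDomain g₂ D) {n : ℤ × ℤ}
    (hn : n ∈ returnTimes g₁ g₂ D) (hn₀ : n ≠ (0, 0)) : n.1 * n.2 ≠ 0 := by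
  obtain ⟨u, hu, hv⟩ := mem_returnTimes.1 hn
  refine mul_ne_zero (fun hn₁ => ?_) fun hn₂ => ?_
  · refine h₂.zpow_apply_notMem hD₂ (fun hn₂ => hn₀ (Prod.ext hn₁ hn₂)) hu ?_
    rwa [hn₁, zpow_zero, one_mul] at hv
  · refine h₁.zpow_apply_notMem hD₁ (fun hn₁ => hn₀ (Prod.ext hn₁ hn₂)) hu ?_
    rwa [hn₂, zpow_zero, mul_one] at hv

lemma zero_notMem_chainShifts_translates (h₁ : IsBrouwer g₁) (h₂ : IsBrouwer g₂)
    (hcomm : Commute g₁ g₂) (hD₁ : IsFreeDomain g₁ D) (hD₂ : IsFreeDomain g₂ D) :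
    0 ∉ chainShifts g₁ (translates g₂ D) := by
  intro h
  obtain ⟨u, hu, hchain⟩ := h 0
  exact h₁.not_transGen_chainStep_self (h₂.isFreeDomainFamily_translates hcomm hD₁ hD₂) u
    (hchain u hu)

lemma isFreeDomain_ball {E : Type*} [SeminormedAddCommGroup E] [NormedSpace ℝ E] {g : E → E}
    {c : E} {r : ℝ} (hg : Metric.ball c r ∩ g '' Metric.ball c r = ∅) :
    IsFreeDomain g (Metric.ball c r) :=
  ⟨Metric.isOpen_ball, (convex_ball c r).isPreconnected, disjoint_iff_inter_eq_empty.2 hg⟩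

theorem return_time_set_dichotomy_general (h₁ : IsBrouwer g₁) (h₂ : IsBrouwer g₂)
    (hcomm : Commute g₁ g₂) (hD₁ : IsFreeDomain g₁ D) (hD₂ : IsFreeDomain g₂ D) :
    returnTimes g₁ g₂ D \ {(0, 0)} ⊆ {n | 0 < n.1 * n.2} ∨
      returnTimes g₁ g₂ D \ {(0, 0)} ⊆ {n | n.1 * n.2 < 0} := by
  by_contra! both_signs
  simp only [not_subset] at both_signs
  obtain ⟨⟨m, ⟨hm, hm₀⟩, m_nonpos⟩, n, ⟨hn, hn₀⟩, n_nonneg⟩ := both_signs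
  have hm_ne := mul_ne_zero_of_mem_returnTimes h₁ h₂ hD₁ hD₂ hm hm₀
  have hn_ne := mul_ne_zero_of_mem_returnTimes h₁ h₂ hD₁ hD₂ hn hn₀
  have m_neg : m.1 * m.2 < 0 := (not_lt.1 m_nonpos).lt_of_ne hm_ne
  have n_pos : 0 < n.1 * n.2 := (not_lt.1 n_nonneg).lt_of_ne hn_ne.symm
  exact zero_notMem_chainShifts_translates h₁ h₂ hcomm hD₁ hD₂ <|
    zero_mem_addSubsemigroup_of_neg_of_pos
      (neg_mul_mem_chainShifts_of_mem_returnTimes hcomm hn (left_ne_zero_of_mul hn_ne))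
      (neg_mul_mem_chainShifts_of_mem_returnTimes hcomm hm (left_ne_zero_of_mul hm_ne))
      (neg_neg_of_pos n_pos) (neg_pos.2 m_neg)

end Dichotomy

/-- Le Roux's return-time lemma: if `g₁`, `g₂` are commuting Brouwer homeomorphisms and
`D` is a nonempty open disk disjoint from its images under `g₁` and `g₂`, then the
return-time set `R = {(n₁, n₂) : g₁^{n₁} g₂^{n₂} (D) ∩ D ≠ ∅}`, away from `(0, 0)`,
is contained either in `{n₁ n₂ > 0}` or in `{n₁ n₂ < 0}`. -/
theorem return_time_set_dichotomy
    (g₁ g₂ : (ℝ × ℝ) ≃ₜ (ℝ × ℝ)) (h₁ : IsBrouwer g₁) (h₂ : IsBrouwer g₂)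
    (hcomm : ∀ z : ℝ × ℝ, g₁ (g₂ z) = g₂ (g₁ z))
    (c : ℝ × ℝ) (r : ℝ) (hr : 0 < r)
    (hD₁ : Metric.ball c r ∩ (g₁ '' Metric.ball c r) = ∅)
    (hD₂ : Metric.ball c r ∩ (g₂ '' Metric.ball c r) = ∅) :
    ({n : ℤ × ℤ | (⇑(g₁.toEquiv ^ n.1) '' (⇑(g₂.toEquiv ^ n.2) '' Metric.ball c r)
        ∩ Metric.ball c r).Nonempty} \ {((0 : ℤ), (0 : ℤ))}
        ⊆ {n : ℤ × ℤ | 0 < n.1 * n.2}) ∨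
    ({n : ℤ × ℤ | (⇑(g₁.toEquiv ^ n.1) '' (⇑(g₂.toEquiv ^ n.2) '' Metric.ball c r)
        ∩ Metric.ball c r).Nonempty} \ {((0 : ℤ), (0 : ℤ))}
        ⊆ {n : ℤ × ℤ | n.1 * n.2 < 0}) := by
  simp only [coe_toEquiv_zpow]
  exact return_time_set_dichotomy_general h₁ h₂ (Homeomorph.ext hcomm) (isFreeDomain_ball hD₁)
    (isFreeDomain_ball hD₂)
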